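/- arXiv:2110.05051 — 3 statements merged into one kernel-verified Lean document; each statement's English description precedes it below -/
import Mathlib

section
/- Let ν ≥ 0, α > -1 and c > 0, and for k ∈ ℕ let μ_k = ∫_0^∞ x^{k+α} e^{-cx} (J_ν(x)+1) dx. Then for every integer k ≥ 1, μ_{k+1} = (1/(c²+1)) · ( c·(2(k+α)+1)·μ_k − ((k+α)² − ν²)·μ_{k−1} + Γ(k+α)·((k+α)² + (k+α) − c²ν²) / c^{k+α+2} ). -/
open MeasureTheory

/-- Bessel function of the first kind of order `ν`, defined via its power series. -/
noncomputable def besselJ (ν x : ℝ) : ℝ :=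
  ∑' m : ℕ, (-1 : ℝ) ^ m / (m.factorial * Real.Gamma ((m : ℝ) + ν + 1)) *
    (x / 2) ^ (2 * (m : ℝ) + ν)

/-- The moments `μ_k = ∫_0^∞ x^{k+α} e^{-cx} (J_ν(x) + 1) dx`. -/
noncomputable def moment (ν α c : ℝ) (k : ℕ) : ℝ :=
  ∫ x in Set.Ioi (0 : ℝ), x ^ ((k : ℝ) + α) * Real.exp (-c * x) * (besselJ ν x + 1)

/-!
The weighted Bessel functions `K_ν^s(x) = x^s e^{-cx} J_ν(x)` have derivatives that are linear
combinations of such functions. For `G = (ν - s) K_ν^s + c K_ν^{s+1} - K_{ν+1}^{s+1}` all terms of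
order `ν + 1` cancel, leaving `G' = c (2s + 1) K_ν^s - (s² - ν²) K_ν^{s-1} - (c² + 1) K_ν^{s+1}`.
As `G` vanishes at `0` and at `∞`, integrating `G'` gives a homogeneous recurrence for `∫ K_ν^s`;
the Gamma integrals coming from the summand `1` account for the inhomogeneous term.

Writing `J_ν(x) = (x/2)^ν C_ν(-x²/4)`, the growth of `J_ν` is controlled by the monotonicity of the
energy `C_ν(t)² - t C_{ν+1}(t)²` if `ν ≥ -1/2`, and then for all `ν` by descending along the
three-term recurrence.
-/

open Filter Set Topology

lemma integral_Ioi_of_hasDerivAt_of_tendsto_nhdsGT {E : Type*} [NormedAddCommGroup E]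
    [NormedSpace ℝ E] [CompleteSpace E] {f f' : ℝ → E} {a : ℝ} {l m : E}
    (hderiv : ∀ x ∈ Ioi a, HasDerivAt f (f' x) x) (hintegrable : IntegrableOn f' (Ioi a))
    (ha : Tendsto f (𝓝[>] a) (𝓝 l)) (htop : Tendsto f atTop (𝓝 m)) :
    ∫ x in Ioi a, f' x = m - l := by
  have hupdate : EqOn (Function.update f a l) f {a}ᶜ := fun x hx => Function.update_of_ne hx l f
  rw [← Ici_sdiff_left] at ha
  simpa using integral_Ioi_of_hasDerivAt_of_tendsto (continuousWithinAt_update_same.2 ha)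
    (fun x hx => (hderiv x hx).congr_of_eventuallyEq
      (hupdate.eventuallyEq_of_mem (isOpen_compl_singleton.mem_nhds (ne_of_gt hx))))
    hintegrable (htop.congr' ((eventually_ne_atTop a).mono fun x hx => (hupdate hx).symm))

section BesselClifford

/-- The coefficients `1 / (m! Γ(m + ν + 1))` of the Bessel–Clifford function. Since `Γ` takes the
value `0` at its poles, this agrees with the entire function `1 / Γ` for every real `ν`. -/
noncomputable def besselCliffordCoeff (ν : ℝ) (m : ℕ) : ℝ :=
  (m.factorial : ℝ)⁻¹ * (Real.Gamma (m + ν + 1))⁻¹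

/-- The Bessel–Clifford function `C_ν(t) = ∑ t ^ m / (m! Γ(m + ν + 1))`, the entire function for
which `J_ν(x) = (x / 2) ^ ν * C_ν(-(x / 2) ^ 2)`. -/
noncomputable def besselClifford (ν t : ℝ) : ℝ :=
  ∑' m : ℕ, besselCliffordCoeff ν m * t ^ m

lemma inv_Gamma_eq_self_mul_inv_Gamma_add_one (s : ℝ) :
    (Real.Gamma s)⁻¹ = s * (Real.Gamma (s + 1))⁻¹ := by
  rcases eq_or_ne s 0 with rfl | hs
  · simp
  · rw [Real.Gamma_add_one hs, mul_inv, mul_inv_cancel_left₀ hs]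

lemma besselCliffordCoeff_eq_mul (ν : ℝ) (m : ℕ) :
    besselCliffordCoeff ν m = (m + ν + 1) * besselCliffordCoeff (ν + 1) m := by
  rw [besselCliffordCoeff, besselCliffordCoeff, inv_Gamma_eq_self_mul_inv_Gamma_add_one,
    ← add_assoc]
  ring

lemma succ_mul_besselCliffordCoeff_succ (ν : ℝ) (m : ℕ) :
    (m + 1) * besselCliffordCoeff ν (m + 1) = besselCliffordCoeff (ν + 1) m := by
  have hm : (m + 1 : ℝ) ≠ 0 := by positivity
  rw [besselCliffordCoeff, besselCliffordCoeff, Nat.factorial_succ, Nat.cast_mul, Nat.cast_succ,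
    mul_inv, mul_assoc, mul_inv_cancel_left₀ hm, add_right_comm (m : ℝ) 1 ν, add_assoc (m : ℝ) ν 1]

lemma summable_besselClifford (ν t : ℝ) :
    Summable fun m : ℕ => besselCliffordCoeff ν m * t ^ m := by
  refine summable_of_ratio_norm_eventually_le one_half_lt_one ?_
  filter_upwards [tendsto_natCast_atTop_atTop.eventually_ge_atTop (2 * |t| - ν)] with m hm
  have hratio : 2 * |t| ≤ |((m : ℝ) + ν + 1) * (m + 1)| := by
    have : (0 : ℝ) ≤ m := m.cast_nonneg
    refine le_trans ?_ (le_abs_self _)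
    nlinarith [abs_nonneg t]
  rw [besselCliffordCoeff_eq_mul ν m, ← succ_mul_besselCliffordCoeff_succ, pow_succ]
  simp only [Real.norm_eq_abs, abs_mul] at hratio ⊢
  have := mul_le_mul_of_nonneg_right hratio
    (by positivity : 0 ≤ |besselCliffordCoeff ν (m + 1)| * |t ^ m|)
  linarith

lemma hasSum_besselClifford (ν t : ℝ) :
    HasSum (fun m : ℕ => besselCliffordCoeff ν m * t ^ m) (besselClifford ν t) :=
  (summable_besselClifford ν t).hasSum

lemma hasSum_deriv_besselClifford (ν t : ℝ) :
    HasSum (fun m : ℕ => besselCliffordCoeff ν m * (m * t ^ (m - 1)))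
      (besselClifford (ν + 1) t) := by
  rw [← hasSum_nat_add_iff' 1]
  simpa [← succ_mul_besselCliffordCoeff_succ, mul_comm, mul_left_comm, mul_assoc] using
    hasSum_besselClifford (ν + 1) t

lemma hasDerivAt_besselClifford (ν t : ℝ) :
    HasDerivAt (besselClifford ν) (besselClifford (ν + 1) t) t := by
  have ht : t ∈ Metric.ball (0 : ℝ) (|t| + 1) := by simp
  rw [← (hasSum_deriv_besselClifford ν t).tsum_eq]
  refine hasDerivAt_tsum_of_isPreconnected
    (hasSum_deriv_besselClifford ν (|t| + 1)).summable.norm Metric.isOpen_ball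
    (convex_ball 0 _).isPreconnected (fun m y _ => (hasDerivAt_pow m y).const_mul _)
    (fun m y hy => ?_) ht (summable_besselClifford ν t) ht
  have hy : |y| ≤ |(|t| + 1)| := (mem_ball_zero_iff.1 hy).le.trans (le_abs_self _)
  simp only [norm_mul, norm_pow, Real.norm_eq_abs]
  gcongr

lemma besselClifford_eq_add (ν t : ℝ) :
    besselClifford ν t = (ν + 1) * besselClifford (ν + 1) t + t * besselClifford (ν + 2) t := by
  have hderiv := hasSum_deriv_besselClifford (ν + 1) t
  rw [add_assoc, one_add_one_eq_two] at hderiv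
  have hsum := ((hasSum_besselClifford (ν + 1) t).mul_left (ν + 1)).add (hderiv.mul_left t)
  refine (hasSum_besselClifford ν t).unique (hsum.congr_fun fun m => ?_)
  rw [besselCliffordCoeff_eq_mul]
  cases m with
  | zero => simp
  | succ m =>
    rw [Nat.add_sub_cancel, pow_succ]
    ring

lemma hasDerivAt_besselClifford_energy (ν t : ℝ) :
    HasDerivAt (fun t => besselClifford ν t ^ 2 - t * besselClifford (ν + 1) t ^ 2)
      ((2 * ν + 1) * besselClifford (ν + 1) t ^ 2) t := by
  have h := ((hasDerivAt_besselClifford ν t).fun_pow 2).fun_sub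
    ((hasDerivAt_id' t).fun_mul ((hasDerivAt_besselClifford (ν + 1) t).fun_pow 2))
  refine h.congr_deriv ?_
  rw [besselClifford_eq_add ν t, add_assoc ν 1 1, one_add_one_eq_two]
  push_cast
  ring

lemma abs_besselClifford_le_of_nonpos {ν t : ℝ} (hν : -1 / 2 ≤ ν) (ht : t ≤ 0) :
    |besselClifford ν t| ≤ |besselClifford ν 0| := by
  have hmono : Monotone fun t => besselClifford ν t ^ 2 - t * besselClifford (ν + 1) t ^ 2 :=
    monotone_of_hasDerivAt_nonneg (hasDerivAt_besselClifford_energy ν) fun t =>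
      mul_nonneg (by linarith) (sq_nonneg _)
  have henergy := hmono ht
  simp only [zero_mul, sub_zero] at henergy
  exact sq_le_sq.1 (by nlinarith [sq_nonneg (besselClifford (ν + 1) t)])

lemma sq_le_mul_exp {ε x : ℝ} (hε : 0 < ε) (hx : 0 ≤ x) :
    x ^ 2 ≤ 2 / ε ^ 2 * Real.exp (ε * x) := by
  have h := Real.pow_div_factorial_le_exp (ε * x) (by positivity) 2
  rw [div_mul_eq_mul_div, le_div_iff₀ (by positivity)]
  norm_num [Nat.factorial] at h
  linarith

lemma exists_abs_besselClifford_le_exp (ν : ℝ) {ε : ℝ} (hε : 0 < ε) :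
    ∃ C, ∀ x, 0 ≤ x → |besselClifford ν (-(x / 2) ^ 2)| ≤ C * Real.exp (ε * x) := by
  obtain ⟨n, hn⟩ := exists_nat_ge (-1 / 2 - ν)
  induction n generalizing ν ε with
  | zero =>
    refine ⟨|besselClifford ν 0|, fun x hx => ?_⟩
    calc |besselClifford ν (-(x / 2) ^ 2)|
        ≤ |besselClifford ν 0| :=
          abs_besselClifford_le_of_nonpos (by simpa using hn) (by nlinarith)
      _ ≤ |besselClifford ν 0| * Real.exp (ε * x) :=
          le_mul_of_one_le_right (abs_nonneg _) (Real.one_le_exp (by positivity))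
  | succ n ih =>
    push_cast at hn
    obtain ⟨C₁, hC₁⟩ := ih (ν + 1) hε (by linarith)
    obtain ⟨C₂, hC₂⟩ := ih (ν + 2) (half_pos hε) (by linarith)
    refine ⟨|ν + 1| * C₁ + 2 / ε ^ 2 * C₂, fun x hx => ?_⟩
    have hsq : (x / 2) ^ 2 ≤ 2 / ε ^ 2 * Real.exp (ε * (x / 2)) := sq_le_mul_exp hε (by positivity)
    have hexp : Real.exp (ε * x) = Real.exp (ε * (x / 2)) * Real.exp (ε / 2 * x) := by
      rw [← Real.exp_add]
      congr 1
      ring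
    calc |besselClifford ν (-(x / 2) ^ 2)|
        ≤ |ν + 1| * |besselClifford (ν + 1) (-(x / 2) ^ 2)|
          + (x / 2) ^ 2 * |besselClifford (ν + 2) (-(x / 2) ^ 2)| := by
          rw [besselClifford_eq_add]
          refine (abs_add_le _ _).trans_eq ?_
          rw [abs_mul, abs_mul, abs_neg, abs_sq]
      _ ≤ |ν + 1| * (C₁ * Real.exp (ε * x))
          + 2 / ε ^ 2 * Real.exp (ε * (x / 2)) * (C₂ * Real.exp (ε / 2 * x)) := by
          gcongr
          exacts [hC₁ x hx, hC₂ x hx]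
      _ = (|ν + 1| * C₁ + 2 / ε ^ 2 * C₂) * Real.exp (ε * x) := by
          rw [hexp]
          ring

end BesselClifford

section BesselJ

lemma besselJ_eq_rpow_mul_besselClifford (ν : ℝ) {x : ℝ} (hx : 0 < x) :
    besselJ ν x = (x / 2) ^ ν * besselClifford ν (-(x / 2) ^ 2) := by
  rw [besselJ, besselClifford, ← tsum_mul_left]
  refine tsum_congr fun m => ?_
  rw [Real.rpow_add (by positivity), Real.rpow_mul (by positivity), Real.rpow_two,
    Real.rpow_natCast, besselCliffordCoeff, neg_pow ((x / 2) ^ 2), div_eq_mul_inv, mul_inv]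
  ring

lemma besselJ_add_besselJ_add_two (ν : ℝ) {x : ℝ} (hx : 0 < x) :
    besselJ ν x + besselJ (ν + 2) x = 2 * (ν + 1) / x * besselJ (ν + 1) x := by
  have hx2 : 0 < x / 2 := by positivity
  simp only [besselJ_eq_rpow_mul_besselClifford _ hx, Real.rpow_add hx2, Real.rpow_one,
    Real.rpow_two]
  rw [besselClifford_eq_add ν]
  field_simp
  ring

lemma hasDerivAt_besselJ (ν : ℝ) {x : ℝ} (hx : 0 < x) :
    HasDerivAt (besselJ ν) (ν / x * besselJ ν x - besselJ (ν + 1) x) x := by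
  have hx2 : 0 < x / 2 := by positivity
  have hpow : HasDerivAt (fun y : ℝ => (y / 2) ^ ν) (1 / 2 * ν * (x / 2) ^ (ν - 1)) x :=
    ((hasDerivAt_id' x).div_const 2).rpow_const (Or.inl hx2.ne')
  have hsq : HasDerivAt (fun y : ℝ => -(y / 2) ^ 2) (-(x / 2)) x :=
    (((hasDerivAt_id' x).div_const 2).fun_pow 2).fun_neg.congr_deriv (by norm_num; ring)
  have hcomp := (hasDerivAt_besselClifford ν (-(x / 2) ^ 2)).comp x hsq
  refine ((hpow.fun_mul hcomp).congr_of_eventuallyEq ?_).congr_deriv ?_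
  · filter_upwards [eventually_gt_nhds hx] with y hy
    exact besselJ_eq_rpow_mul_besselClifford ν hy
  · simp only [besselJ_eq_rpow_mul_besselClifford _ hx, Real.rpow_add hx2, Real.rpow_sub hx2,
      Real.rpow_one, Function.comp_apply]
    field_simp
    ring

lemma hasDerivAt_besselJ_add_one (ν : ℝ) {x : ℝ} (hx : 0 < x) :
    HasDerivAt (besselJ (ν + 1)) (besselJ ν x - (ν + 1) / x * besselJ (ν + 1) x) x := by
  refine (hasDerivAt_besselJ (ν + 1) hx).congr_deriv ?_
  rw [add_assoc, one_add_one_eq_two]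
  linear_combination -besselJ_add_besselJ_add_two ν hx

lemma exists_abs_besselJ_le_rpow_mul_exp (ν : ℝ) {ε : ℝ} (hε : 0 < ε) :
    ∃ C, ∀ x, 0 < x → |besselJ ν x| ≤ C * (x ^ ν * Real.exp (ε * x)) := by
  obtain ⟨C, hC⟩ := exists_abs_besselClifford_le_exp ν hε
  refine ⟨(2 ^ ν)⁻¹ * C, fun x hx => ?_⟩
  calc |besselJ ν x|
      = (x / 2) ^ ν * |besselClifford ν (-(x / 2) ^ 2)| := by
        rw [besselJ_eq_rpow_mul_besselClifford ν hx, abs_mul, abs_of_pos (by positivity)]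
    _ ≤ (x / 2) ^ ν * (C * Real.exp (ε * x)) := by
        gcongr
        exact hC x hx.le
    _ = (2 ^ ν)⁻¹ * C * (x ^ ν * Real.exp (ε * x)) := by
        rw [Real.div_rpow hx.le zero_le_two]
        ring

end BesselJ

section WeightedBessel

/-- The weighted Bessel function `x ^ s * e ^ (-c x) * J_ν(x)`, the integrand of the Bessel part
of the moments. -/
noncomputable def weightedBesselJ (c ν s x : ℝ) : ℝ :=
  x ^ s * Real.exp (-c * x) * besselJ ν x

variable {c : ℝ}

lemma hasDerivAt_rpow_mul_exp (c s : ℝ) {x : ℝ} (hx : 0 < x) :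
    HasDerivAt (fun y : ℝ => y ^ s * Real.exp (-c * y))
      ((s / x - c) * (x ^ s * Real.exp (-c * x))) x := by
  have hpow := Real.hasDerivAt_rpow_const (p := s) (Or.inl hx.ne')
  have hexp := ((hasDerivAt_id' x).const_mul (-c)).exp
  refine (hpow.fun_mul hexp).congr_deriv ?_
  rw [Real.rpow_sub_one hx.ne']
  ring

lemma div_mul_weightedBesselJ (a c ν s : ℝ) {x : ℝ} (hx : 0 < x) :
    a / x * weightedBesselJ c ν s x = a * weightedBesselJ c ν (s - 1) x := by
  rw [weightedBesselJ, weightedBesselJ, Real.rpow_sub_one hx.ne']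
  ring

lemma hasDerivAt_weightedBesselJ (c ν s : ℝ) {x : ℝ} (hx : 0 < x) :
    HasDerivAt (weightedBesselJ c ν s)
      ((s + ν) * weightedBesselJ c ν (s - 1) x - c * weightedBesselJ c ν s x
        - weightedBesselJ c (ν + 1) s x) x := by
  refine ((hasDerivAt_rpow_mul_exp c s hx).fun_mul (hasDerivAt_besselJ ν hx)).congr_deriv ?_
  rw [← div_mul_weightedBesselJ _ _ _ _ hx]
  simp only [weightedBesselJ]
  ring

lemma hasDerivAt_weightedBesselJ_add_one (c ν s : ℝ) {x : ℝ} (hx : 0 < x) :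
    HasDerivAt (weightedBesselJ c (ν + 1) s)
      ((s - (ν + 1)) * weightedBesselJ c (ν + 1) (s - 1) x - c * weightedBesselJ c (ν + 1) s x
        + weightedBesselJ c ν s x) x := by
  refine ((hasDerivAt_rpow_mul_exp c s hx).fun_mul (hasDerivAt_besselJ_add_one ν hx)).congr_deriv ?_
  rw [← div_mul_weightedBesselJ _ _ _ _ hx]
  simp only [weightedBesselJ]
  ring

lemma hasDerivAt_weightedBesselJ_primitive (c ν s : ℝ) {x : ℝ} (hx : 0 < x) :
    HasDerivAt
      (fun x => (ν - s) * weightedBesselJ c ν s x + c * weightedBesselJ c ν (s + 1) x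
        - weightedBesselJ c (ν + 1) (s + 1) x)
      (c * (2 * s + 1) * weightedBesselJ c ν s x - (s ^ 2 - ν ^ 2) * weightedBesselJ c ν (s - 1) x
        - (c ^ 2 + 1) * weightedBesselJ c ν (s + 1) x) x := by
  refine ((((hasDerivAt_weightedBesselJ c ν s hx).const_mul (ν - s)).fun_add
    ((hasDerivAt_weightedBesselJ c ν (s + 1) hx).const_mul c)).fun_sub
    (hasDerivAt_weightedBesselJ_add_one c ν (s + 1) hx)).congr_deriv ?_
  rw [add_sub_cancel_right]
  ring

lemma exists_abs_weightedBesselJ_le (ν s : ℝ) (hc : 0 < c) :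
    ∃ C, ∀ x, 0 < x → |weightedBesselJ c ν s x| ≤ C * (x ^ (s + ν) * Real.exp (-(c / 2) * x)) := by
  obtain ⟨C, hC⟩ := exists_abs_besselJ_le_rpow_mul_exp ν (half_pos hc)
  refine ⟨C, fun x hx => ?_⟩
  calc |weightedBesselJ c ν s x|
      = x ^ s * Real.exp (-c * x) * |besselJ ν x| := by
        rw [weightedBesselJ, abs_mul, abs_of_pos (by positivity)]
    _ ≤ x ^ s * Real.exp (-c * x) * (C * (x ^ ν * Real.exp (c / 2 * x))) := by
        gcongr
        exact hC x hx
    _ = C * (x ^ (s + ν) * Real.exp (-(c / 2) * x)) := by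
        rw [Real.rpow_add hx, show -(c / 2) * x = -c * x + c / 2 * x by ring, Real.exp_add]
        ring

lemma integrableOn_rpow_mul_exp {s : ℝ} (hc : 0 < c) (hs : -1 < s) :
    IntegrableOn (fun x : ℝ => x ^ s * Real.exp (-c * x)) (Ioi 0) := by
  simpa only [Real.rpow_one] using integrableOn_rpow_mul_exp_neg_mul_rpow hs one_pos hc

lemma integrableOn_weightedBesselJ {ν s : ℝ} (hc : 0 < c) (hs : -1 < s + ν) :
    IntegrableOn (weightedBesselJ c ν s) (Ioi 0) := by
  obtain ⟨C, hC⟩ := exists_abs_weightedBesselJ_le ν s hc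
  have hcont : ContinuousOn (weightedBesselJ c ν s) (Ioi 0) := fun x hx =>
    (hasDerivAt_weightedBesselJ c ν s hx).continuousAt.continuousWithinAt
  exact ((integrableOn_rpow_mul_exp (half_pos hc) hs).const_mul C).mono'
    (hcont.aestronglyMeasurable measurableSet_Ioi)
    (ae_restrict_of_forall_mem measurableSet_Ioi hC)

lemma tendsto_weightedBesselJ_atTop (ν s : ℝ) (hc : 0 < c) :
    Tendsto (weightedBesselJ c ν s) atTop (𝓝 0) := by
  obtain ⟨C, hC⟩ := exists_abs_weightedBesselJ_le ν s hc
  refine squeeze_zero_norm' ((eventually_gt_atTop 0).mono hC) ?_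
  simpa using
    (tendsto_rpow_mul_exp_neg_mul_atTop_nhds_zero (s + ν) (c / 2) (half_pos hc)).const_mul C

lemma tendsto_weightedBesselJ_nhdsGT_zero {ν s : ℝ} (hc : 0 < c) (hs : 0 < s + ν) :
    Tendsto (weightedBesselJ c ν s) (𝓝[>] 0) (𝓝 0) := by
  obtain ⟨C, hC⟩ := exists_abs_weightedBesselJ_le ν s hc
  have hcont : ContinuousAt (fun x : ℝ => C * (x ^ (s + ν) * Real.exp (-(c / 2) * x))) 0 :=
    ((Real.continuousAt_rpow_const 0 _ (Or.inr hs.le)).mul (by fun_prop)).const_mul C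
  refine squeeze_zero_norm' (eventually_mem_nhdsWithin.mono hC) ?_
  simpa [Real.zero_rpow hs.ne'] using hcont.tendsto.mono_left nhdsWithin_le_nhds

theorem integral_weightedBesselJ_recurrence {ν s : ℝ} (hc : 0 < c) (hs : 0 < s + ν) :
    (c ^ 2 + 1) * ∫ x in Ioi 0, weightedBesselJ c ν (s + 1) x =
      c * (2 * s + 1) * (∫ x in Ioi 0, weightedBesselJ c ν s x)
        - (s ^ 2 - ν ^ 2) * ∫ x in Ioi 0, weightedBesselJ c ν (s - 1) x := by
  have hintegrable (a : ℝ) {r : ℝ} (hr : s - 1 ≤ r) :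
      IntegrableOn (fun x => a * weightedBesselJ c ν r x) (Ioi 0) :=
    (integrableOn_weightedBesselJ hc (by linarith)).const_mul a
  have hintegrable_succ := hintegrable (c ^ 2 + 1) (r := s + 1) (by linarith)
  have hintegrable_self := hintegrable (c * (2 * s + 1)) (r := s) (by linarith)
  have hintegrable_pred := hintegrable (s ^ 2 - ν ^ 2) le_rfl
  have hintegrable_diff : IntegrableOn (fun x => c * (2 * s + 1) * weightedBesselJ c ν s x
      - (s ^ 2 - ν ^ 2) * weightedBesselJ c ν (s - 1) x) (Ioi 0) :=
    hintegrable_self.sub hintegrable_pred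
  have hzero := (((tendsto_weightedBesselJ_nhdsGT_zero hc hs).const_mul (ν - s)).add
    ((tendsto_weightedBesselJ_nhdsGT_zero (s := s + 1) (ν := ν) hc (by linarith)).const_mul c)).sub
    (tendsto_weightedBesselJ_nhdsGT_zero (s := s + 1) (ν := ν + 1) hc (by linarith))
  have htop := (((tendsto_weightedBesselJ_atTop ν s hc).const_mul (ν - s)).add
    ((tendsto_weightedBesselJ_atTop ν (s + 1) hc).const_mul c)).sub
    (tendsto_weightedBesselJ_atTop (ν + 1) (s + 1) hc)
  have hFTC := integral_Ioi_of_hasDerivAt_of_tendsto_nhdsGT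
    (fun x hx => hasDerivAt_weightedBesselJ_primitive c ν s hx)
    (hintegrable_diff.sub hintegrable_succ) hzero htop
  rw [integral_sub hintegrable_diff hintegrable_succ,
    integral_sub hintegrable_self hintegrable_pred, integral_const_mul,
    integral_const_mul, integral_const_mul, sub_self] at hFTC
  linarith

end WeightedBessel

section Moment

variable {ν α c : ℝ}

lemma integral_rpow_mul_exp {s : ℝ} (hc : 0 < c) (hs : 0 < s) :
    ∫ x in Ioi (0 : ℝ), x ^ (s - 1) * Real.exp (-c * x) = Real.Gamma s / c ^ s := by
  simp only [neg_mul]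
  rw [Real.integral_rpow_mul_exp_neg_mul_Ioi hs hc, one_div, Real.inv_rpow hc.le,
    inv_mul_eq_div]

lemma moment_eq_integral_weightedBesselJ_add {k : ℕ} {s : ℝ} (hc : 0 < c) (hk : k + α = s - 1)
    (hs : 0 < s) (hsν : 0 < s + ν) :
    moment ν α c k =
      (∫ x in Ioi 0, weightedBesselJ c ν (s - 1) x) + Real.Gamma s / c ^ s := by
  rw [← integral_rpow_mul_exp hc hs, ← integral_add
    (integrableOn_weightedBesselJ hc (by linarith)) (integrableOn_rpow_mul_exp hc (by linarith)),
    moment, hk]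
  simp only [weightedBesselJ, mul_add, mul_one]

lemma Gamma_div_rpow_recurrence (ν : ℝ) {s : ℝ} (hc : 0 < c) (hs : 0 < s) :
    (c ^ 2 + 1) * (Real.Gamma (s + 2) / c ^ (s + 2)) =
      c * (2 * s + 1) * (Real.Gamma (s + 1) / c ^ (s + 1))
        - (s ^ 2 - ν ^ 2) * (Real.Gamma s / c ^ s)
        + Real.Gamma s * (s ^ 2 + s - c ^ 2 * ν ^ 2) / c ^ (s + 2) := by
  have hs1 : s + 1 ≠ 0 := by positivity
  rw [show s + 2 = s + 1 + 1 by ring, Real.Gamma_add_one hs1, Real.Gamma_add_one hs.ne',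
    Real.rpow_add_one hc.ne', Real.rpow_add_one hc.ne']
  field_simp
  ring

theorem moment_recurrence_general (hc : 0 < c) {k : ℕ} (hk : 1 ≤ k) (hkα : 0 < k + α)
    (hkαν : 0 < k + α + ν) :
    moment ν α c (k + 1) =
      (1 / (c ^ 2 + 1)) *
        (c * (2 * ((k : ℝ) + α) + 1) * moment ν α c k -
          (((k : ℝ) + α) ^ 2 - ν ^ 2) * moment ν α c (k - 1) +
          Real.Gamma ((k : ℝ) + α) * (((k : ℝ) + α) ^ 2 + ((k : ℝ) + α) - c ^ 2 * ν ^ 2) /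
            c ^ ((k : ℝ) + α + 2)) := by
  set s := (k : ℝ) + α
  have hsucc := moment_eq_integral_weightedBesselJ_add (ν := ν) (α := α) (k := k + 1) (s := s + 2)
    hc (by push_cast; linarith) (by linarith) (by linarith)
  have hself := moment_eq_integral_weightedBesselJ_add (ν := ν) (α := α) (k := k) (s := s + 1)
    hc (by linarith) (by linarith) (by linarith)
  have hpred := moment_eq_integral_weightedBesselJ_add (ν := ν) (α := α) (k := k - 1) (s := s)
    hc (by push_cast [hk]; linarith) hkα hkαν
  rw [show s + 2 - 1 = s + 1 by ring] at hsucc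
  rw [add_sub_cancel_right] at hself
  rw [hsucc, hself, hpred, one_div_mul_eq_div, eq_div_iff (by positivity)]
  linear_combination integral_weightedBesselJ_recurrence hc hkαν +
    Gamma_div_rpow_recurrence ν hc hkα

end Moment

theorem moment_recurrence (ν α c : ℝ) (hν : 0 ≤ ν) (hα : -1 < α) (hc : 0 < c)
    (k : ℕ) (hk : 1 ≤ k) :
    moment ν α c (k + 1) =
      (1 / (c ^ 2 + 1)) *
        (c * (2 * ((k : ℝ) + α) + 1) * moment ν α c k -
          (((k : ℝ) + α) ^ 2 - ν ^ 2) * moment ν α c (k - 1) +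
          Real.Gamma ((k : ℝ) + α) * (((k : ℝ) + α) ^ 2 + ((k : ℝ) + α) - c ^ 2 * ν ^ 2) /
            c ^ ((k : ℝ) + α + 2)) := by
  have hk' : (1 : ℝ) ≤ k := mod_cast hk
  exact moment_recurrence_general hc hk (by linarith) (by linarith)
end

section
/- Let α > -1, c > 0 and k ≥ 1. Let M_k^{α,c} ∈ ℝ^{k×k} have entries (M_k^{α,c})_{ij} = Γ(i+j+α−1) / c^{i+j+α−1} for 1 ≤ i,j ≤ k, and let R_k^{α,c} ∈ ℝ^{k×k} be the upper triangular matrix with (R_k^{α,c})_{ij} = c^{−(α+1)/2} · c^{1−j} · ((j−1)!/(j−i)!) · Γ(α+j) / √(Γ(i)Γ(α+i)) for i ≤ j and 0 otherwise. Then M_k^{α,c} = (R_k^{α,c})^T R_k^{α,c}. -/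
open Matrix

/-- The Hankel moment matrix of the weight `x^α e^{-cx}`:
`(M_k^{α,c})_{ij} = Γ(i+j+α−1)/c^{i+j+α−1}` (1-based indices). -/
noncomputable def lagMc (α c : ℝ) (k : ℕ) : Matrix (Fin k) (Fin k) ℝ :=
  Matrix.of fun i j =>
    Real.Gamma (((i : ℕ) : ℝ) + ((j : ℕ) : ℝ) + α + 1) /
      c ^ (((i : ℕ) : ℝ) + ((j : ℕ) : ℝ) + α + 1)

/-- The upper triangular matrix
`(R_k^{α,c})_{ij} = c^{−(α+1)/2} · c^{1−j} · ((j−1)!/(j−i)!) · Γ(α+j) / √(Γ(i)Γ(α+i))`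
for `i ≤ j` (1-based indices), and `0` otherwise. -/
noncomputable def lagRc (α c : ℝ) (k : ℕ) : Matrix (Fin k) (Fin k) ℝ :=
  Matrix.of fun i j =>
    if (i : ℕ) ≤ (j : ℕ) then
      c ^ (-(α + 1) / 2) * c ^ ((1 : ℝ) - (((j : ℕ) : ℝ) + 1)) *
        (((j : ℕ).factorial : ℝ) / (((j : ℕ) - (i : ℕ)).factorial : ℝ) *
          Real.Gamma (α + ((j : ℕ) : ℝ) + 1) /
          Real.sqrt (Real.Gamma (((i : ℕ) : ℝ) + 1) * Real.Gamma (α + ((i : ℕ) : ℝ) + 1)))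
    else 0

/-!
Since the falling factorials `i.descFactorial l` vanish for `i < l`, the product entry
`∑ l, R l i * R l j` equals, up to the common power of `c`, the sum
`∑ l, C(i, l) j(j-1)⋯(j-l+1) Γ(α+i+1) Γ(α+j+1) / Γ(α+l+1)`. Each quotient
`Γ(α+i+1) / Γ(α+l+1)` is a rising factorial of `α+l+1`, so the Chu–Vandermonde identity evaluates
the sum to the rising factorial `Γ(α+i+j+1) / Γ(α+j+1)` times `Γ(α+j+1)`.
-/

open Finset Polynomial

theorem descPochhammer_smeval_eq_eval {R : Type*} [Ring R] (r : R) (n : ℕ) :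
    (descPochhammer ℤ n).smeval r = (descPochhammer R n).eval r := by
  rw [descPochhammer_smeval_eq_ascPochhammer, ascPochhammer_smeval_eq_eval,
    descPochhammer_eval_eq_ascPochhammer]

theorem ascPochhammer_eval_add_eq_sum {R : Type*} [CommRing R] (x y : R) (n : ℕ) :
    (ascPochhammer R n).eval (x + y) = ∑ p ∈ antidiagonal n,
      n.choose p.1 * ((descPochhammer R p.1).eval y * (ascPochhammer R p.2).eval (x + p.1)) := by
  have vandermonde := Ring.descPochhammer_smeval_add n (Commute.all y (x + n - 1))
  simp only [descPochhammer_smeval_eq_eval] at vandermonde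
  calc (ascPochhammer R n).eval (x + y)
      = (descPochhammer R n).eval (y + (x + n - 1)) := by
        rw [descPochhammer_eval_eq_ascPochhammer]
        congr 1
        ring
    _ = ∑ p ∈ antidiagonal n, n.choose p.1 *
          ((descPochhammer R p.1).eval y * (descPochhammer R p.2).eval (x + n - 1)) := vandermonde
    _ = _ := sum_congr rfl fun p hp => by
        have shift : x + n - 1 - p.2 + 1 = x + p.1 := by
          rw [← mem_antidiagonal.mp hp, Nat.cast_add]
          ring
        rw [descPochhammer_eval_eq_ascPochhammer R (x + n - 1), shift]

theorem gamma_add_natCast {x : ℝ} (hx : ∀ m : ℕ, x ≠ -m) (n : ℕ) :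
    Real.Gamma (x + n) = (ascPochhammer ℝ n).eval x * Real.Gamma x := by
  induction n with
  | zero => simp
  | succ n ih =>
    have hxn : x + n ≠ 0 := fun h => hx n (eq_neg_of_add_eq_zero_left h)
    rw [Nat.cast_succ, ← add_assoc, Real.Gamma_add_one hxn, ih, ascPochhammer_succ_eval]
    ring

theorem gamma_add_add_natCast_eq_sum {x y : ℝ} (hx : ∀ m : ℕ, x ≠ -m) (hxy : ∀ m : ℕ, x + y ≠ -m)
    (n : ℕ) :
    Real.Gamma (x + y + n) = ∑ l ∈ range (n + 1), n.choose l * (descPochhammer ℝ l).eval y *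
      (Real.Gamma (x + n) * Real.Gamma (x + y) / Real.Gamma (x + l)) := by
  rw [gamma_add_natCast hxy, ascPochhammer_eval_add_eq_sum, sum_mul,
    Nat.sum_antidiagonal_eq_sum_range_succ_mk]
  refine sum_congr rfl fun l hl => ?_
  have hxl (m : ℕ) : x + l ≠ -m := fun h => hx (l + m) (by push_cast; linarith)
  have gamma_ratio :
      Real.Gamma (x + n) = (ascPochhammer ℝ (n - l)).eval (x + l) * Real.Gamma (x + l) := by
    rw [← gamma_add_natCast hxl, Nat.cast_sub (mem_range_succ_iff.mp hl)]
    congr 1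
    ring
  rw [gamma_ratio]
  field_simp [Real.Gamma_ne_zero hxl]

theorem lagRc_apply (α : ℝ) {c : ℝ} (hc : 0 < c) {k : ℕ} (l i : Fin k) :
    lagRc α c k l i = c ^ (-(α + 1) / 2 - i) * ((i : ℕ).descFactorial l *
      Real.Gamma (α + 1 + i) / √((l : ℕ).factorial * Real.Gamma (α + 1 + l))) := by
  rw [lagRc, of_apply]
  split_ifs with hli
  · have factorial_ratio : ((i : ℕ).factorial : ℝ) / ((i : ℕ) - (l : ℕ)).factorial =
        (i : ℕ).descFactorial l := by
      rw [div_eq_iff (by positivity), mul_comm]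
      exact_mod_cast (Nat.factorial_mul_descFactorial hli).symm
    rw [factorial_ratio, Real.Gamma_nat_eq_factorial, ← Real.rpow_add hc, add_right_comm α,
      add_right_comm α]
    ring_nf
  · rw [Nat.descFactorial_of_lt (not_le.mp hli)]
    simp

theorem lagRc_apply_mul_lagRc_apply {α c : ℝ} (hα : -1 < α) (hc : 0 < c) {k : ℕ} (l i j : Fin k) :
    lagRc α c k l i * lagRc α c k l j =
      (i : ℕ).choose l * (j : ℕ).descFactorial l *
        (Real.Gamma (α + 1 + i) * Real.Gamma (α + 1 + j) / Real.Gamma (α + 1 + l)) /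
          c ^ ((i : ℝ) + j + α + 1) := by
  have gamma_pos : 0 < Real.Gamma (α + 1 + l) :=
    Real.Gamma_pos_of_pos (add_pos_of_pos_of_nonneg (by linarith) (Nat.cast_nonneg _))
  have rpow_mul_rpow : c ^ (-(α + 1) / 2 - i) * c ^ (-(α + 1) / 2 - j) =
      (c ^ ((i : ℝ) + j + α + 1))⁻¹ := by
    rw [← Real.rpow_add hc, ← Real.rpow_neg hc.le]
    ring_nf
  have sqrt_mul_sqrt := Real.mul_self_sqrt
    (show 0 ≤ (l : ℕ).factorial * Real.Gamma (α + 1 + l) by positivity)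
  rw [lagRc_apply α hc, lagRc_apply α hc, mul_mul_mul_comm, rpow_mul_rpow, div_mul_div_comm,
    sqrt_mul_sqrt, Nat.descFactorial_eq_factorial_mul_choose i, Nat.cast_mul]
  field_simp

theorem lagMc_cholesky (α c : ℝ) (hα : -1 < α) (hc : 0 < c) (k : ℕ) (hk : 1 ≤ k) :
    lagMc α c k = (lagRc α c k)ᵀ * lagRc α c k := by
  ext i j
  have hx (m : ℕ) : α + 1 ≠ -m := by linarith [m.cast_nonneg (α := ℝ)]
  have hxy (m : ℕ) : α + 1 + j ≠ -m := fun h => hx (j + m) (by push_cast; linarith)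
  let summand (l : ℕ) : ℝ := (i : ℕ).choose l * (j : ℕ).descFactorial l *
    (Real.Gamma (α + 1 + i) * Real.Gamma (α + 1 + j) / Real.Gamma (α + 1 + l))
  calc lagMc α c k i j
      = Real.Gamma (α + 1 + j + i) / c ^ ((i : ℝ) + j + α + 1) := by
        rw [lagMc, of_apply]
        congr 2
        ring
    _ = (∑ l ∈ range (i + 1), summand l) / c ^ ((i : ℝ) + j + α + 1) := by
        simp only [gamma_add_add_natCast_eq_sum hx hxy, descPochhammer_eval_eq_descFactorial, summand]
    _ = (∑ l ∈ range k, summand l) / c ^ ((i : ℝ) + j + α + 1) := by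
        congr 1
        refine sum_subset (range_mono i.isLt) fun l _ hl => ?_
        simp [summand, Nat.choose_eq_zero_of_lt (by simpa using hl : (i : ℕ) < l)]
    _ = ((lagRc α c k)ᵀ * lagRc α c k) i j := by
        simp only [mul_apply, transpose_apply, lagRc_apply_mul_lagRc_apply hα hc, ← sum_div,
          ← Fin.sum_univ_eq_sum_range, summand]
end

section
/- Let α > -1, c > 0 and k ≥ 1. Let R_k^{α,c} ∈ ℝ^{k×k} be the upper triangular matrix with (R_k^{α,c})_{ij} = c^{−(α+1)/2} · c^{1−j} · ((j−1)!/(j−i)!) · Γ(α+j) / √(Γ(i)Γ(α+i)) for i ≤ j and 0 otherwise. Then R_k^{α,c} is invertible and its inverse is the upper triangular matrix with entries ((R_k^{α,c})^{-1})_{ij} = c^{(α+1)/2} · c^{i−1} · (−1)^{i+j} √( (j−1)! Γ(α+j) ) / ( (j−i)! Γ(i) Γ(α+i) ) for i ≤ j and 0 otherwise. -/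
open Matrix

/-- The claimed inverse of `R_k^{α,c}`: the upper triangular matrix with entries
`c^{(α+1)/2} · c^{i−1} · (−1)^{i+j} √((j−1)! Γ(α+j)) / ((j−i)! Γ(i) Γ(α+i))`
for `i ≤ j` (1-based indices), and `0` otherwise. -/
noncomputable def lagRcInv (α c : ℝ) (k : ℕ) : Matrix (Fin k) (Fin k) ℝ :=
  Matrix.of fun i j =>
    if (i : ℕ) ≤ (j : ℕ) then
      c ^ ((α + 1) / 2) * c ^ ((((i : ℕ) : ℝ) + 1) - 1) *
        ((-1 : ℝ) ^ ((i : ℕ) + (j : ℕ)) *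
          Real.sqrt (((j : ℕ).factorial : ℝ) * Real.Gamma (α + ((j : ℕ) : ℝ) + 1)) /
          ((((j : ℕ) - (i : ℕ)).factorial : ℝ) * Real.Gamma (((i : ℕ) : ℝ) + 1) *
            Real.Gamma (α + ((i : ℕ) : ℝ) + 1)))
    else 0

/-!
With the weights `rᵢ = c^{-(α+1)/2} / √(i! Γ(α+i+1))` and `sⱼ = c^{-j} j! Γ(α+j+1)` (0-based
indices), `R = diag(r) E diag(s)`, where `E` is the Toeplitz matrix with entries `1/(j-i)!`.
Sending a power series to the upper triangular Toeplitz matrix of its coefficients is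
multiplicative, and `E` is the image of `exp X`, so `E⁻¹` is the image of `exp (-X)`, with entries
`(-1)^{j-i}/(j-i)!`. Hence `R⁻¹ = diag(s⁻¹) E⁻¹ diag(r⁻¹)`.
-/

theorem sum_Icc_eq_sum_antidiagonal_sub {M : Type*} [AddCommMonoid M] {k : ℕ} {i l : Fin k}
    (hil : i ≤ l) (F : ℕ → ℕ → M) :
    ∑ j ∈ Finset.Icc i l, F (j - i) (l - j) =
      ∑ p ∈ Finset.HasAntidiagonal.antidiagonal (l - i : ℕ), F p.1 p.2 := by
  refine Finset.sum_nbij (fun j => ((j - i : ℕ), (l - j : ℕ))) ?mapsTo ?injOn ?surjOn fun _ _ => rfl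
  case mapsTo =>
    intro j hj
    rw [Finset.mem_Icc] at hj
    rw [Finset.HasAntidiagonal.mem_antidiagonal]
    omega
  case injOn =>
    intro j hj j' hj' h
    simp only [Finset.coe_Icc, Set.mem_Icc, Prod.mk.injEq] at hj hj' h
    omega
  case surjOn =>
    rintro ⟨a, b⟩ hab
    rw [Finset.mem_coe, Finset.HasAntidiagonal.mem_antidiagonal] at hab
    refine ⟨⟨i + a, by omega⟩, ?_, ?_⟩
    · simp only [Finset.coe_Icc, Set.mem_Icc, Fin.le_def]
      omega
    · simp only [Prod.mk.injEq]
      omega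

section UpperToeplitz

open PowerSeries

variable {R : Type*} [Semiring R]

/-- The `k × k` upper triangular Toeplitz matrix of a power series: the entry on the `n`-th
superdiagonal is the `n`-th coefficient. It represents right multiplication by the series modulo
`X ^ k`, acting on row vectors of coefficients. -/
noncomputable def upperToeplitz (k : ℕ) (f : R⟦X⟧) : Matrix (Fin k) (Fin k) R :=
  Matrix.of fun i j => if i ≤ j then coeff (j - i : ℕ) f else 0

theorem upperToeplitz_apply_of_le {k : ℕ} (f : R⟦X⟧) {i j : Fin k} (hij : i ≤ j) :
    upperToeplitz k f i j = coeff (j - i : ℕ) f :=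
  if_pos hij

theorem upperToeplitz_apply_of_lt {k : ℕ} (f : R⟦X⟧) {i j : Fin k} (hji : j < i) :
    upperToeplitz k f i j = 0 :=
  if_neg hji.not_ge

theorem upperToeplitz_one (k : ℕ) : upperToeplitz k (1 : R⟦X⟧) = 1 := by
  ext i j
  rcases lt_trichotomy i j with hij | rfl | hji
  · have hsub : (j - i : ℕ) ≠ 0 := Nat.sub_ne_zero_of_lt hij
    rw [upperToeplitz_apply_of_le _ hij.le, coeff_one, if_neg hsub, one_apply_ne hij.ne]
  · rw [upperToeplitz_apply_of_le _ le_rfl, Nat.sub_self, coeff_zero_one, one_apply_eq]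
  · rw [upperToeplitz_apply_of_lt _ hji, one_apply_ne hji.ne']

theorem upperToeplitz_mul (k : ℕ) (f g : R⟦X⟧) :
    upperToeplitz k (f * g) = upperToeplitz k f * upperToeplitz k g := by
  ext i l
  have term_eq_zero (j : Fin k) (hj : j ∉ Finset.Icc i l) :
      upperToeplitz k f i j * upperToeplitz k g j l = 0 := by
    rw [Finset.mem_Icc, not_and_or, not_le, not_le] at hj
    rcases hj with hji | hlj
    · rw [upperToeplitz_apply_of_lt f hji, zero_mul]
    · rw [upperToeplitz_apply_of_lt g hlj, mul_zero]
  rw [mul_apply, ← Finset.sum_subset (Finset.subset_univ (Finset.Icc i l))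
    fun j _ hj => term_eq_zero j hj]
  rcases le_or_gt i l with hil | hli
  · rw [upperToeplitz_apply_of_le _ hil, coeff_mul,
      ← sum_Icc_eq_sum_antidiagonal_sub hil fun a b => coeff a f * coeff b g]
    refine Finset.sum_congr rfl fun j hj => ?_
    obtain ⟨hij, hjl⟩ := Finset.mem_Icc.mp hj
    rw [upperToeplitz_apply_of_le f hij, upperToeplitz_apply_of_le g hjl]
  · rw [upperToeplitz_apply_of_lt _ hli, Finset.Icc_eq_empty hli.not_ge, Finset.sum_empty]

end UpperToeplitz

theorem upperToeplitz_exp_mul_upperToeplitz_exp_neg (A : Type*) [CommRing A] [Algebra ℚ A] (k : ℕ) :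
    upperToeplitz k (PowerSeries.exp A) *
      upperToeplitz k (PowerSeries.evalNegHom (PowerSeries.exp A)) = 1 := by
  rw [← upperToeplitz_mul, PowerSeries.exp_mul_exp_neg_eq_one, upperToeplitz_one]

theorem diagonal_mul_mul_diagonal_mul_inv_eq_one {n K : Type*} [Fintype n] [DecidableEq n]
    [Field K] {A B : Matrix n n K} (hAB : A * B = 1) {d e : n → K} (hd : ∀ i, d i ≠ 0)
    (he : ∀ i, e i ≠ 0) :
    diagonal d * A * diagonal e * (diagonal (fun i => (e i)⁻¹) * B * diagonal fun i => (d i)⁻¹) =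
      1 := by
  have diagonal_mul_inv {v : n → K} (hv : ∀ i, v i ≠ 0) :
      diagonal v * diagonal (fun i => (v i)⁻¹) = 1 := by
    simp_rw [diagonal_mul_diagonal, mul_inv_cancel₀ (hv _), diagonal_one]
  calc
    _ = diagonal d * (A * (diagonal e * diagonal fun i => (e i)⁻¹) * B) *
          diagonal fun i => (d i)⁻¹ := by simp only [Matrix.mul_assoc]
    _ = 1 := by rw [diagonal_mul_inv he, Matrix.mul_one, hAB, Matrix.mul_one, diagonal_mul_inv hd]

theorem neg_one_pow_sub_eq_neg_one_pow_add {M : Type*} [Monoid M] [HasDistribNeg M] {i j : ℕ}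
    (hij : i ≤ j) : (-1 : M) ^ (j - i) = (-1) ^ (i + j) := by
  obtain ⟨d, rfl⟩ := Nat.exists_eq_add_of_le hij
  rw [Nat.add_sub_cancel_left, ← add_assoc, pow_add _ (i + i), Even.neg_one_pow ⟨i, rfl⟩, one_mul]

section Weights

open PowerSeries

variable {α c : ℝ}

/-- The factor of the `(i, j)` entry of `lagRc α c k` depending only on the 0-based row index `i`,
together with the constant power of `c`. -/
noncomputable def lagRowWeight (α c : ℝ) (i : ℕ) : ℝ :=
  c ^ (-(α + 1) / 2) / √(i.factorial * Real.Gamma (α + i + 1))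

/-- The factor of the `(i, j)` entry of `lagRc α c k` depending only on the 0-based column
index `j`. -/
noncomputable def lagColWeight (α c : ℝ) (j : ℕ) : ℝ :=
  c ^ (-j : ℝ) * (j.factorial * Real.Gamma (α + j + 1))

theorem factorial_mul_Gamma_pos (hα : -1 < α) (n : ℕ) :
    0 < n.factorial * Real.Gamma (α + n + 1) := by
  have hΓ : 0 < Real.Gamma (α + n + 1) :=
    Real.Gamma_pos_of_pos (by linarith [n.cast_nonneg (α := ℝ)])
  positivity

theorem lagRowWeight_ne_zero (hα : -1 < α) (hc : 0 < c) (i : ℕ) : lagRowWeight α c i ≠ 0 :=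
  (div_pos (Real.rpow_pos_of_pos hc _) (Real.sqrt_pos.mpr (factorial_mul_Gamma_pos hα i))).ne'

theorem lagColWeight_ne_zero (hα : -1 < α) (hc : 0 < c) (j : ℕ) : lagColWeight α c j ≠ 0 :=
  (mul_pos (Real.rpow_pos_of_pos hc _) (factorial_mul_Gamma_pos hα j)).ne'

theorem inv_lagRowWeight (hc : 0 ≤ c) (i : ℕ) :
    (lagRowWeight α c i)⁻¹ = c ^ ((α + 1) / 2) * √(i.factorial * Real.Gamma (α + i + 1)) := by
  rw [lagRowWeight, inv_div, neg_div, Real.rpow_neg hc, div_inv_eq_mul, mul_comm]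

theorem inv_lagColWeight (hc : 0 ≤ c) (j : ℕ) :
    (lagColWeight α c j)⁻¹ = c ^ (j : ℝ) / (j.factorial * Real.Gamma (α + j + 1)) := by
  rw [lagColWeight, mul_inv, Real.rpow_neg hc, inv_inv, div_eq_mul_inv]

theorem lagRc_eq_diagonal_mul_mul_diagonal (α c : ℝ) (k : ℕ) :
    lagRc α c k = diagonal (fun i : Fin k => lagRowWeight α c i) * upperToeplitz k (exp ℝ) *
      diagonal fun j : Fin k => lagColWeight α c j := by
  ext i j
  rw [mul_diagonal, diagonal_mul]
  rcases le_or_gt i j with hij | hji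
  · have exponent_eq : (1 : ℝ) - ((j : ℕ) + 1) = -(j : ℕ) := by ring
    rw [upperToeplitz_apply_of_le _ hij, coeff_exp, lagRc, of_apply, if_pos (Fin.le_def.mp hij),
      Real.Gamma_nat_eq_factorial, exponent_eq, lagRowWeight, lagColWeight]
    push_cast
    ring
  · rw [upperToeplitz_apply_of_lt _ hji, lagRc, of_apply, if_neg (Fin.lt_def.mp hji).not_ge,
      mul_zero, zero_mul]

theorem lagRcInv_eq_diagonal_mul_mul_diagonal (α : ℝ) (hc : 0 ≤ c) (k : ℕ) :
    lagRcInv α c k = diagonal (fun i : Fin k => (lagColWeight α c i)⁻¹) *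
      upperToeplitz k (evalNegHom (exp ℝ)) *
        diagonal fun j : Fin k => (lagRowWeight α c j)⁻¹ := by
  ext i j
  rw [mul_diagonal, diagonal_mul]
  rcases le_or_gt i j with hij | hji
  · have hij' : (i : ℕ) ≤ j := hij
    rw [upperToeplitz_apply_of_le _ hij, evalNegHom, coeff_rescale, coeff_exp,
      neg_one_pow_sub_eq_neg_one_pow_add hij', inv_lagRowWeight hc, inv_lagColWeight hc, lagRcInv,
      of_apply, if_pos hij', Real.Gamma_nat_eq_factorial, add_sub_cancel_right]
    push_cast
    ring
  · rw [upperToeplitz_apply_of_lt _ hji, lagRcInv, of_apply, if_neg (Fin.lt_def.mp hji).not_ge,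
      mul_zero, zero_mul]

end Weights

theorem lagRc_mul_lagRcInv {α c : ℝ} (hα : -1 < α) (hc : 0 < c) (k : ℕ) :
    lagRc α c k * lagRcInv α c k = 1 := by
  rw [lagRc_eq_diagonal_mul_mul_diagonal, lagRcInv_eq_diagonal_mul_mul_diagonal α hc.le]
  exact diagonal_mul_mul_diagonal_mul_inv_eq_one (upperToeplitz_exp_mul_upperToeplitz_exp_neg ℝ k)
    (fun i => lagRowWeight_ne_zero hα hc i) fun j => lagColWeight_ne_zero hα hc j

theorem lagRc_inverse (α c : ℝ) (hα : -1 < α) (hc : 0 < c) (k : ℕ) (hk : 1 ≤ k) :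
    IsUnit (lagRc α c k) ∧ (lagRc α c k)⁻¹ = lagRcInv α c k := by
  have right_inverse : lagRc α c k * lagRcInv α c k = 1 := lagRc_mul_lagRcInv hα hc k
  exact ⟨IsUnit.of_mul_eq_one _ right_inverse, inv_eq_right_inv right_inverse⟩
end
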